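/- Kernel-image trace exists for isometries: let τ : U ⊕ K → U ⊕ L be an isometry with blocks [[A,B],[C,D]]. Then there exist linear maps i : L → U and k : K → U such that C = (I - A) ∘ i-adjoint-form, precisely: B = (I - A) ∘ k (B factors through I - A on the left) and C = j ∘ (I - A) for some j : U → L composed appropriately; i.e., range(B) ⊆ range(I - A) and ker(I - A) ⊆ ker(C). -/

import Mathlib

open Matrix

/-!
An isometry is a contraction. If `τ = fromBlocks A B C D` has `‖τ‖ ≤ 1` and `A x = x`, then
`‖x‖ ^ 2 ≥ ‖τ (x, 0)‖ ^ 2 = ‖x‖ ^ 2 + ‖C x‖ ^ 2`, so `C x = 0`. Hence `ker (1 - A) ≤ ker C`, and `C`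
factors through `1 - A`. The factorization of `B` is the same fact for the contraction `τᴴ`, whose
lower left block is `Bᴴ`.
-/

theorem exists_comp_eq_iff_ker_le_ker {R M N P : Type*} [Ring R] [AddCommGroup M] [Module R M]
    [AddCommGroup N] [Module R N] [AddCommGroup P] [Module R P] [IsSemisimpleModule R P]
    {f : M →ₗ[R] P} {g : M →ₗ[R] N} :
    (∃ h : P →ₗ[R] N, h ∘ₗ f = g) ↔ f.ker ≤ g.ker := by
  refine ⟨fun ⟨h, hfg⟩ ↦ hfg ▸ f.ker_le_ker_comp h, fun hle ↦ ?_⟩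
  have liftQ_injective : Function.Injective (f.ker.liftQ f le_rfl) :=
    LinearMap.ker_eq_bot.1 (f.ker.ker_liftQ_eq_bot f le_rfl le_rfl)
  obtain ⟨h, hh⟩ := IsSemisimpleModule.extension_property _ liftQ_injective (f.ker.liftQ g hle)
  exact ⟨h, by rw [← f.ker.liftQ_mkQ f le_rfl, ← LinearMap.comp_assoc, hh, f.ker.liftQ_mkQ]⟩

theorem exists_eq_mul_iff_ker_mulVecLin_le {R m n p : Type*} [CommRing R] [IsSemisimpleRing R]
    [Fintype n] [Fintype p] {M : Matrix m n R} {N : Matrix p n R} :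
    (∃ J : Matrix m p R, M = J * N) ↔ N.mulVecLin.ker ≤ M.mulVecLin.ker := by
  classical
  rw [← exists_comp_eq_iff_ker_le_ker, toLin'.surjective.exists]
  refine exists_congr fun J ↦ ?_
  rw [← toLin'_apply' M, ← toLin'_apply' N, ← toLin'_mul, toLin'.injective.eq_iff, eq_comm]

section Contraction

open scoped Matrix.Norms.L2Operator

variable {𝕜 m n p q : Type*} [RCLike 𝕜] [Fintype m] [Fintype n] [Fintype p] [Fintype q]
  [DecidableEq m] [DecidableEq n]

theorem l2_opNorm_le_one_of_conjTranspose_mul_self_eq_one {M : Matrix p n 𝕜} (hM : Mᴴ * M = 1) :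
    ‖M‖ ≤ 1 := by
  have norm_sq_le : ‖M‖ ^ 2 ≤ 1 :=
    calc ‖M‖ ^ 2 = ‖(1 : Matrix n n 𝕜)‖ := by rw [sq, ← l2_opNorm_conjTranspose_mul_self, hM]
      _ ≤ 1 := IsStarProjection.norm_le _ (.one _)
  exact (sq_le_one_iff₀ (norm_nonneg M)).1 norm_sq_le

theorem norm_sq_mulVec_add_norm_sq_mulVec_le_fromBlocks (A : Matrix p m 𝕜) (B : Matrix p n 𝕜)
    (C : Matrix q m 𝕜) (D : Matrix q n 𝕜) (x : m → 𝕜) :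
    ‖WithLp.toLp 2 (A *ᵥ x)‖ ^ 2 + ‖WithLp.toLp 2 (C *ᵥ x)‖ ^ 2 ≤
      (‖fromBlocks A B C D‖ * ‖WithLp.toLp 2 x‖) ^ 2 := by
  have norm_toLp_elim : ‖WithLp.toLp 2 (Sum.elim x (0 : n → 𝕜))‖ = ‖WithLp.toLp 2 x‖ := by
    simp [EuclideanSpace.norm_eq]
  have norm_mulVec_le := l2_opNorm_mulVec (fromBlocks A B C D) (WithLp.toLp 2 (Sum.elim x 0))
  calc ‖WithLp.toLp 2 (A *ᵥ x)‖ ^ 2 + ‖WithLp.toLp 2 (C *ᵥ x)‖ ^ 2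
      = ‖WithLp.toLp 2 (fromBlocks A B C D *ᵥ Sum.elim x 0)‖ ^ 2 := by
        simp [EuclideanSpace.norm_sq_eq, fromBlocks_mulVec]
    _ ≤ (‖fromBlocks A B C D‖ * ‖WithLp.toLp 2 x‖) ^ 2 := by
        rw [← norm_toLp_elim]
        gcongr
        exact norm_mulVec_le

variable {A : Matrix m m 𝕜} {B : Matrix m n 𝕜} {C : Matrix p m 𝕜} {D : Matrix p n 𝕜}

theorem mulVec_eq_zero_of_l2_opNorm_fromBlocks_le_one (hτ : ‖fromBlocks A B C D‖ ≤ 1) {x : m → 𝕜}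
    (hx : A *ᵥ x = x) : C *ᵥ x = 0 := by
  have norm_sq_le : ‖WithLp.toLp 2 x‖ ^ 2 + ‖WithLp.toLp 2 (C *ᵥ x)‖ ^ 2 ≤ ‖WithLp.toLp 2 x‖ ^ 2 :=
    calc ‖WithLp.toLp 2 x‖ ^ 2 + ‖WithLp.toLp 2 (C *ᵥ x)‖ ^ 2
        ≤ (‖fromBlocks A B C D‖ * ‖WithLp.toLp 2 x‖) ^ 2 := by
          simpa only [hx] using norm_sq_mulVec_add_norm_sq_mulVec_le_fromBlocks A B C D x
      _ ≤ ‖WithLp.toLp 2 x‖ ^ 2 := by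
          gcongr
          exact mul_le_of_le_one_left (norm_nonneg _) hτ
  have norm_sq_nonpos : ‖WithLp.toLp 2 (C *ᵥ x)‖ ^ 2 ≤ 0 := by linarith
  simpa using norm_sq_nonpos

theorem exists_eq_mul_one_sub_of_l2_opNorm_fromBlocks_le_one (hτ : ‖fromBlocks A B C D‖ ≤ 1) :
    ∃ J : Matrix p m 𝕜, C = J * (1 - A) := by
  refine exists_eq_mul_iff_ker_mulVecLin_le.2 fun x hx ↦ ?_
  have hAx : A *ᵥ x = x := by
    rw [LinearMap.mem_ker, mulVecLin_apply, sub_mulVec, one_mulVec, sub_eq_zero] at hx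
    exact hx.symm
  exact mulVec_eq_zero_of_l2_opNorm_fromBlocks_le_one hτ hAx

theorem stmt16_general (hτ : ‖fromBlocks A B C D‖ ≤ 1) :
    (∃ K : Matrix m n 𝕜, B = (1 - A) * K) ∧ (∃ J : Matrix p m 𝕜, C = J * (1 - A)) := by
  classical
  refine ⟨?_, exists_eq_mul_one_sub_of_l2_opNorm_fromBlocks_le_one hτ⟩
  have hτ' : ‖fromBlocks Aᴴ Cᴴ Bᴴ Dᴴ‖ ≤ 1 := by
    rwa [← fromBlocks_conjTranspose, l2_opNorm_conjTranspose]
  obtain ⟨J, hJ⟩ := exists_eq_mul_one_sub_of_l2_opNorm_fromBlocks_le_one hτ'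
  refine ⟨Jᴴ, conjTranspose_injective ?_⟩
  simpa using hJ

end Contraction

/-- The kernel-image trace exists for isometries: B factors through I - A on the left
and C factors through I - A on the right. -/
theorem stmt16 {u k l : ℕ}
    (A : Matrix (Fin u) (Fin u) ℂ) (B : Matrix (Fin u) (Fin k) ℂ)
    (C : Matrix (Fin l) (Fin u) ℂ) (D : Matrix (Fin l) (Fin k) ℂ)
    (hiso : (fromBlocks A B C D)ᴴ * fromBlocks A B C D = 1) :
    (∃ K : Matrix (Fin u) (Fin k) ℂ, B = (1 - A) * K) ∧
    (∃ J : Matrix (Fin l) (Fin u) ℂ, C = J * (1 - A)) :=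
  stmt16_general (l2_opNorm_le_one_of_conjTranspose_mul_self_eq_one hiso)
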